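/- The square relation holds: with H := (id_{V⁺}⊗t^-_{++})∘(t^{++}_-⊗id_{V⁺}) : V⁻⊗V⁺ → V⁺⊗V⁻ and H̄ := (t^-_{++}⊗id_{V⁺})∘(id_{V⁺}⊗t^{++}_-) : V⁺⊗V⁻ → V⁻⊗V⁺, one has H̄ ∘ H = id_{V⁻⊗V⁺} + b^{-+} ∘ σ_{-+} as endomorphisms of V⁻⊗V⁺ (where b^{-+} ∘ σ_{-+} sends x to σ_{-+}(x)·b^{-+}(1)). -/

import Mathlib

/-!
In the bases `e_a ⊗ e_b` the two H-maps have the same matrix. Away from the zero-weight space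
(`b ≠ -a`) it exchanges the tensor factors, so its square is the identity there. On the zero-weight
space, in the basis `e_1 ⊗ e_{-1}`, `e_0 ⊗ e_0`, `e_{-1} ⊗ e_1`, it is the symmetric matrix
`M = !![v, 1, 0; 1, 0, 1; 0, 1, v⁻¹]`, and `M ^ 2 = 1 + u uᵀ` for `u = (v, 1, v⁻¹)`. Since
`b^{-+}(1) = v⁻¹ u` and `σ_{-+} = v uᵀ`, the rank-one term `u uᵀ` is `b^{-+} ∘ σ_{-+}`.
-/

noncomputable section

/-- The ground field `K = ℚ(v)`. -/
abbrev K : Type := RatFunc ℚ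

/-- The indeterminate `v`. -/
def v : K := RatFunc.X

/-- The three states `-1, 0, 1`. -/
inductive St where
  | neg : St
  | zero : St
  | pos : St
deriving DecidableEq

instance : Fintype St where
  elems := {St.neg, St.zero, St.pos}
  complete := fun x => by cases x <;> simp

/-- The integer value of a state. -/
def stval : St → ℤ
  | .neg => -1
  | .zero => 0
  | .pos => 1

/-- The order `-1 < 0 < 1` on states. -/
def stLt (a b : St) : Prop := stval a < stval b

/-- The weight `μ(s, j) ∈ ℤ²`; `true` is the sign `+`, `false` is `-`. -/
def wt : Bool → St → ℤ × ℤ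
  | true, .pos => (1, 0)
  | true, .zero => (-1, 1)
  | true, .neg => (0, -1)
  | false, .pos => (0, 1)
  | false, .zero => (1, -1)
  | false, .neg => (-1, 0)

/-- Total weight `Σ μ(s_k, j_k)` of a sign string and a state string. -/
def wtSum (S : List Bool) (J : List St) : ℤ × ℤ :=
  ((S.zip J).map fun p => wt p.1 p.2).sum

/-- A state string is dominant if its lattice path stays in the dominant
Weyl chamber and returns to the origin. -/
def Dominant (S : List Bool) (J : List St) : Prop :=
  J.length = S.length ∧
  (∀ k : ℕ, 0 ≤ (wtSum (S.take k) (J.take k)).1 ∧ 0 ≤ (wtSum (S.take k) (J.take k)).2) ∧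
  wtSum S J = 0

/-- Coefficients of `b^{+-}(1) ∈ V⁺ ⊗ V⁻`. -/
def bCpm : St → St → K
  | .pos, .neg => 1
  | .zero, .zero => v⁻¹
  | .neg, .pos => v⁻¹ ^ 2
  | _, _ => 0

/-- Coefficients of `b^{-+}(1) ∈ V⁻ ⊗ V⁺`. -/
def bCmp : St → St → K
  | .pos, .neg => 1
  | .zero, .zero => v⁻¹
  | .neg, .pos => v⁻¹ ^ 2
  | _, _ => 0

/-- Matrix entries of `σ_{+-} : V⁺ ⊗ V⁻ → K`. -/
def sCpm : St → St → K
  | .neg, .pos => 1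
  | .zero, .zero => v
  | .pos, .neg => v ^ 2
  | _, _ => 0

/-- Matrix entries of `σ_{-+} : V⁻ ⊗ V⁺ → K`. -/
def sCmp : St → St → K
  | .neg, .pos => 1
  | .zero, .zero => v
  | .pos, .neg => v ^ 2
  | _, _ => 0

/-- `tYpp a b c` is the coefficient of `e_a ⊗ e_b` in `t^{++}_-(e_c)`. -/
def tYpp : St → St → St → K
  | .pos, .zero, .pos => 1
  | .zero, .pos, .pos => v⁻¹
  | .pos, .neg, .zero => 1
  | .neg, .pos, .zero => v⁻¹
  | .zero, .neg, .neg => 1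
  | .neg, .zero, .neg => v⁻¹
  | _, _, _ => 0

/-- `tYmm a b c` is the coefficient of `e_a ⊗ e_b` in `t^{--}_+(e_c)`. -/
def tYmm : St → St → St → K
  | .pos, .zero, .pos => 1
  | .zero, .pos, .pos => v⁻¹
  | .pos, .neg, .zero => 1
  | .neg, .pos, .zero => v⁻¹
  | .zero, .neg, .neg => 1
  | .neg, .zero, .neg => v⁻¹
  | _, _, _ => 0

/-- `tLpp a b c` is the coefficient of `e_c` in `t^-_{++}(e_a ⊗ e_b)`. -/
def tLpp : St → St → St → K
  | .pos, .zero, .pos => v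
  | .zero, .pos, .pos => 1
  | .pos, .neg, .zero => v
  | .neg, .pos, .zero => 1
  | .zero, .neg, .neg => v
  | .neg, .zero, .neg => 1
  | _, _, _ => 0

/-- `tLmm a b c` is the coefficient of `e_c` in `t^+_{--}(e_a ⊗ e_b)`. -/
def tLmm : St → St → St → K
  | .pos, .zero, .pos => v
  | .zero, .pos, .pos => 1
  | .pos, .neg, .zero => v
  | .neg, .pos, .zero => 1
  | .zero, .neg, .neg => v
  | .neg, .zero, .neg => 1
  | _, _, _ => 0

/-- Matrix entries of the H-map
`(id_{V⁺} ⊗ t^-_{++}) ∘ (t^{++}_- ⊗ id_{V⁺}) : V⁻ ⊗ V⁺ → V⁺ ⊗ V⁻`: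
`HCpm a b c d` is the coefficient of `e_a ⊗ e_b` in the image of `e_c ⊗ e_d`. -/
def HCpm (a b c d : St) : K := ∑ y : St, tYpp a y c * tLpp y d b

/-- Matrix entries of the H-map
`(t^-_{++} ⊗ id_{V⁺}) ∘ (id_{V⁺} ⊗ t^{++}_-) : V⁺ ⊗ V⁻ → V⁻ ⊗ V⁺`:
`HCmp a b c d` is the coefficient of `e_a ⊗ e_b` in the image of `e_c ⊗ e_d`. -/
def HCmp (a b c d : St) : K := ∑ x : St, tLpp c x a * tYpp x b d

/-- State patterns of the three H-rules: `(j_k, j_{k+1})` on top, the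
replacement below. -/
inductive HPat : St → St → St → St → Prop where
  | h1 : HPat .pos .zero .zero .pos
  | h2 : HPat .zero .zero .neg .pos
  | h3 : HPat .zero .neg .neg .zero

/-- State patterns of the three Y-rules. -/
inductive YPat : St → St → St → Prop where
  | y1 : YPat .pos .zero .pos
  | y2 : YPat .pos .neg .zero
  | y3 : YPat .zero .neg .neg

/-- One application of a growth rule, rewriting `(S, J)` to `(S', J')`. -/
inductive Step : List Bool → List St → List Bool → List St → Prop where
  | hstep (A B : List Bool) (P Q : List St) (s1 s2 : Bool) (j1 j2 j1' j2' : St)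
      (hl : A.length = P.length) (hs : s1 ≠ s2) (hp : HPat j1 j2 j1' j2') :
      Step (A ++ s1 :: s2 :: B) (P ++ j1 :: j2 :: Q)
        (A ++ (!s1) :: (!s2) :: B) (P ++ j1' :: j2' :: Q)
  | ustep (A B : List Bool) (P Q : List St) (s1 s2 : Bool)
      (hl : A.length = P.length) (hs : s1 ≠ s2) :
      Step (A ++ s1 :: s2 :: B) (P ++ St.pos :: St.neg :: Q) (A ++ B) (P ++ Q)
  | ystep (A B : List Bool) (P Q : List St) (s : Bool) (j1 j2 j' : St)
      (hl : A.length = P.length) (hp : YPat j1 j2 j') :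
      Step (A ++ s :: s :: B) (P ++ j1 :: j2 :: Q) (A ++ (!s) :: B) (P ++ j' :: Q)

/-- A complete execution of the growth algorithm from `(S, J)` down to the
pair of empty strings. -/
inductive Exec : List Bool → List St → Type where
  | nil : Exec [] []
  | hstep (A B : List Bool) (P Q : List St) (s1 s2 : Bool) (j1 j2 j1' j2' : St)
      (hl : A.length = P.length) (hs : s1 ≠ s2) (hp : HPat j1 j2 j1' j2')
      (e : Exec (A ++ (!s1) :: (!s2) :: B) (P ++ j1' :: j2' :: Q)) :
      Exec (A ++ s1 :: s2 :: B) (P ++ j1 :: j2 :: Q)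
  | ustep (A B : List Bool) (P Q : List St) (s1 s2 : Bool)
      (hl : A.length = P.length) (hs : s1 ≠ s2)
      (e : Exec (A ++ B) (P ++ Q)) :
      Exec (A ++ s1 :: s2 :: B) (P ++ St.pos :: St.neg :: Q)
  | ystep (A B : List Bool) (P Q : List St) (s : Bool) (j1 j2 j' : St)
      (hl : A.length = P.length) (hp : YPat j1 j2 j')
      (e : Exec (A ++ (!s) :: B) (P ++ j' :: Q)) :
      Exec (A ++ s :: s :: B) (P ++ j1 :: j2 :: Q)

/-- The web tensor of an execution, as coordinates with respect to the basis
`e^S_J` of `V^S`: `web e L` is the coefficient of `e^S_L`. -/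
def web : {S : List Bool} → {J : List St} → Exec S J → List St → K
  | _, _, .nil, L => if L = [] then 1 else 0
  | _, _, .hstep A _ _ _ s1 _ _ _ _ _ _ _ _ e, L =>
      match L.drop A.length with
      | a :: b :: R =>
          ∑ c : St, ∑ d : St,
            (if s1 then HCpm a b c d else HCmp a b c d) *
              web e (L.take A.length ++ c :: d :: R)
      | _ => 0
  | _, _, .ustep A _ _ _ s1 _ _ _ e, L =>
      match L.drop A.length with
      | a :: b :: R => (if s1 then bCpm a b else bCmp a b) * web e (L.take A.length ++ R)
      | _ => 0
  | _, _, .ystep A _ _ _ s _ _ _ _ _ e, L =>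
      match L.drop A.length with
      | a :: b :: R =>
          ∑ c : St, (if s then tYpp a b c else tYmm a b c) * web e (L.take A.length ++ c :: R)
      | _ => 0

/-- `c ∈ v⁻¹ ℤ[v⁻¹]`: a polynomial in `v⁻¹` with zero constant term. -/
def ZeroConst (c : K) : Prop :=
  ∃ p : Polynomial ℤ, p.coeff 0 = 0 ∧ c = Polynomial.aeval v⁻¹ p

/-- `x` has the negative-exponent property relative to a state string `J`
(`n` is the length of the ambient sign string). -/
def NegExpProp (n : ℕ) (x : List St → K) (J : List St) : Prop :=
  x J = 1 ∧ ∀ J' : List St, J'.length = n → J' ≠ J → ZeroConst (x J')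

/-- `c ∈ ℕ[v, v⁻¹]`: a Laurent polynomial with nonnegative integer
coefficients. -/
def IsNatLaurent (c : K) : Prop :=
  ∃ (p : Polynomial ℕ) (m : ℕ), c = v⁻¹ ^ m * Polynomial.aeval v p

/-- `c ∈ ℤ[v⁻¹]`. -/
def InZInv (c : K) : Prop := ∃ p : Polynomial ℤ, c = Polynomial.aeval v⁻¹ p

/-- Property P: all coefficients lie in `ℤ[v⁻¹]` and at most one of them has a
nonzero constant term. -/
def PropP (n : ℕ) (x : List St → K) : Prop :=
  (∀ J : List St, J.length = n → InZInv (x J)) ∧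
  ∀ J1 J2 : List St, J1.length = n → J2.length = n →
    ¬ ZeroConst (x J1) → ¬ ZeroConst (x J2) → J1 = J2

/-- The sign string `(+,+,−,−,+,+,−,−,+,+,−,−)`. -/
def base : List Bool :=
  [true, true, false, false, true, true, false, false, true, true, false, false]


/-- The involution `j ↦ -j` of the set of states: the basis tensor `e_a ⊗ e_b` of `V⁻ ⊗ V⁺` or
`V⁺ ⊗ V⁻` has weight zero exactly when `b = -a`. -/
instance : InvolutiveNeg St where
  neg
    | .neg => .pos
    | .zero => .zero
    | .pos => .neg
  neg_neg a := by cases a <;> rfl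

@[simp]
theorem St.neg_pos : -St.pos = .neg := rfl

@[simp]
theorem St.neg_zero : -St.zero = .zero := rfl

@[simp]
theorem St.neg_neg : -St.neg = .pos := rfl

theorem St.sum_univ {M : Type*} [AddCommMonoid M] (f : St → M) :
    ∑ a, f a = f .neg + f .zero + f .pos := by
  change ∑ a ∈ {St.neg, St.zero, St.pos}, f a = _
  rw [Finset.sum_insert (by decide), Finset.sum_pair (by decide), add_assoc]

section ZeroWeight

open Matrix

variable {F : Type*} [DivisionRing F]

/-- The coordinates of a tensor on the zero-weight space, indexed by the state of the first
factor. -/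
def zeroWeightPart {R : Type*} (x : St → St → R) (a : St) : R := x a (-a)

/-- The vector `u = (q, 1, q⁻¹)` on the states `1, 0, -1`, to which both `b^{-+}(1)` and `σ_{-+}`
are proportional. -/
def stPow (q : F) (a : St) : F := q ^ stval a

/-- The matrix `!![q, 1, 0; 1, 0, 1; 0, 1, q⁻¹]`, on the states in the order `1, 0, -1`, by which
an H-map acts on the zero-weight space. -/
def zeroWeightH (q : F) : Matrix St St F
  | .pos, .pos => q
  | .neg, .neg => q⁻¹
  | .pos, .zero | .zero, .pos | .zero, .neg | .neg, .zero => 1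
  | .pos, .neg | .zero, .zero | .neg, .pos => 0

/-- The H-map with parameter `q`, acting on the coordinates of a tensor. -/
def hMap (q : F) (x : St → St → F) (a b : St) : F :=
  if b = -a then (zeroWeightH q *ᵥ zeroWeightPart x) a else x b a

theorem zeroWeightH_isSymm (q : F) : (zeroWeightH q).IsSymm := by
  ext a b
  cases a <;> cases b <;> rfl

theorem zeroWeightH_mul_self {q : F} (hq : q ≠ 0) :
    zeroWeightH q * zeroWeightH q = 1 + vecMulVec (stPow q) (stPow q) := by
  ext a b
  cases a <;> cases b <;>
    simp [Matrix.mul_apply, St.sum_univ, zeroWeightH, vecMulVec_apply, stPow, stval, hq, add_comm]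

theorem zeroWeightPart_hMap (q : F) (x : St → St → F) :
    zeroWeightPart (hMap q x) = zeroWeightH q *ᵥ zeroWeightPart x :=
  funext fun _ => if_pos rfl

theorem hMap_hMap {q : F} (hq : q ≠ 0) (x : St → St → F) (a b : St) :
    hMap q (hMap q x) a b =
      x a b + if b = -a then stPow q a * (stPow q ⬝ᵥ zeroWeightPart x) else 0 := by
  by_cases hab : b = -a
  · subst hab
    calc hMap q (hMap q x) a (-a)
        = ((zeroWeightH q * zeroWeightH q) *ᵥ zeroWeightPart x) a := by
          rw [hMap, if_pos rfl, zeroWeightPart_hMap, mulVec_mulVec]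
      _ = x a (-a) + stPow q a * (stPow q ⬝ᵥ zeroWeightPart x) := by
          rw [zeroWeightH_mul_self hq, add_mulVec, one_mulVec, vecMulVec_mulVec]
          rfl
      _ = _ := by rw [if_pos rfl]
  · have hba : a ≠ -b := fun h => hab (neg_eq_iff_eq_neg.mp h.symm)
    rw [hMap, if_neg hab, hMap, if_neg hba, if_neg hab, add_zero]

end ZeroWeight

theorem v_ne_zero : v ≠ 0 := RatFunc.X_ne_zero

theorem tLpp_eq_v_mul_tYpp (a b c : St) : tLpp a b c = v * tYpp a b c := by
  cases a <;> cases b <;> cases c <;> simp [tLpp, tYpp, v_ne_zero]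

theorem HCmp_eq_HCpm_swap (a b c d : St) : HCmp a b c d = HCpm c d a b := by
  simp only [HCmp, HCpm, tLpp_eq_v_mul_tYpp, mul_assoc, mul_left_comm v]

theorem HCpm_neg (a c d : St) :
    HCpm a (-a) c d = if d = -c then zeroWeightH v a c else 0 := by
  cases a <;> cases c <;> cases d <;>
    simp [HCpm, St.sum_univ, tYpp, tLpp, zeroWeightH, v_ne_zero]

theorem HCpm_of_ne_neg {a b : St} (hab : b ≠ -a) (c d : St) :
    HCpm a b c d = if c = b ∧ d = a then 1 else 0 := by
  revert hab
  cases a <;> cases b <;> cases c <;> cases d <;>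
    simp [HCpm, St.sum_univ, tYpp, tLpp, v_ne_zero]

theorem HCpm_swap (a b c d : St) : HCpm c d a b = HCpm a b c d := by
  by_cases hab : b = -a <;> by_cases hcd : d = -c
  · rw [hab, hcd, HCpm_neg, HCpm_neg, if_pos rfl, if_pos rfl, (zeroWeightH_isSymm v).apply]
  · rw [HCpm_of_ne_neg hcd, hab, HCpm_neg, if_neg hcd, if_neg]
    rintro ⟨rfl, rfl⟩
    exact hcd (neg_neg _).symm
  · rw [HCpm_of_ne_neg hab, hcd, HCpm_neg, if_neg hab, if_neg]
    rintro ⟨rfl, rfl⟩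
    exact hab (neg_neg _).symm
  · simp only [HCpm_of_ne_neg hab, HCpm_of_ne_neg hcd, and_comm, eq_comm]

theorem HCmp_eq_HCpm : HCmp = HCpm := by
  ext a b c d
  rw [HCmp_eq_HCpm_swap, HCpm_swap]

theorem sum_HCpm_mul (x : St → St → K) (a b : St) :
    ∑ c, ∑ d, HCpm a b c d * x c d = hMap v x a b := by
  by_cases hab : b = -a
  · simp [hab, HCpm_neg, hMap, Matrix.mulVec, dotProduct, zeroWeightPart]
  · simp [hab, HCpm_of_ne_neg, hMap, ite_and]

theorem bCmp_eq (a b : St) : bCmp a b = if b = -a then v⁻¹ * stPow v a else 0 := by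
  cases a <;> cases b <;> simp [bCmp, stPow, stval, v_ne_zero, sq]

theorem sCmp_eq (a b : St) : sCmp a b = if b = -a then v * stPow v a else 0 := by
  cases a <;> cases b <;> simp [sCmp, stPow, stval, v_ne_zero, sq]

theorem sum_sCmp_mul (x : St → St → K) :
    ∑ a, ∑ b, sCmp a b * x a b = v * (stPow v ⬝ᵥ zeroWeightPart x) := by
  simp [sCmp_eq, dotProduct, zeroWeightPart, Finset.mul_sum, mul_assoc]

/-- the square relation `H̄ ∘ H = id + b^{-+} ∘ σ_{-+}` on
`V⁻ ⊗ V⁺`, in coordinates. -/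
theorem square_relation :
    ∀ (x : St → St → K) (a b : St),
      (∑ c : St, ∑ d : St, HCmp a b c d * ∑ e : St, ∑ f : St, HCpm c d e f * x e f) =
        x a b + (∑ e : St, ∑ f : St, sCmp e f * x e f) * bCmp a b := by
  intro x a b
  rw [HCmp_eq_HCpm]
  simp only [sum_HCpm_mul]
  rw [hMap_hMap v_ne_zero, sum_sCmp_mul, bCmp_eq]
  congr 1
  split_ifs
  · field_simp [v_ne_zero]
  · rw [mul_zero]

end
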